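/- arXiv:2510.21234 — 2 statements merged into one kernel-verified Lean document; each statement's English description precedes it below -/
import Mathlib

section
/- Let I be a nonempty set and let ℓ₁(I) be the real Banach space of absolutely summable families x = (x_i)_{i∈I} of real numbers with the norm ‖x‖ = Σ_{i∈I} |x_i|. Then the almost preserved extreme points of the closed unit ball B_{ℓ₁(I)} are exactly the signed standard basis vectors ±e_i, i ∈ I, where e_i(j) = 1 if j = i and e_i(j) = 0 otherwise. -/
/-!
Every nonempty slice of the unit ball `B` of `ℓ₁(I)` contains some `±eⱼ`: since
`f x = ∑ xⱼ f(eⱼ)`, a functional with `|f(eⱼ)| ≤ c` for all `j` satisfies `f ≤ c` on `B`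
(`exists_lt_abs_apply_single`). Hence an almost preserved extreme point `x` lies in the weak
closure of `{±eⱼ}`. A single functional then decides: if `x = 0`, the set `|∑ yⱼ| < 1` is a weak
neighbourhood of `x` missing all `±eⱼ`; if `0 < |xᵢ| < 1` for some `i`, so is `0 < |yᵢ| < 1`;
and if `|xᵢ| = 1`, then `‖x‖ ≤ 1` forces `x = ±eᵢ`.

Conversely `s eᵢ` (`s = ±1`) is even denting: on `B` one has `‖y - s eᵢ‖ ≤ 2 (1 - s yᵢ)`
(`norm_sub_single_le`), so the slices of `y ↦ s yᵢ` form a neighbourhood base at `s eᵢ` in norm,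
a fortiori weakly.
-/

open Set Metric Topology Bornology

noncomputable section

/-- The weak topology σ(X, X*) on a normed space X. -/
def weakTop (X : Type*) [NormedAddCommGroup X] [NormedSpace ℝ X] : TopologicalSpace X :=
  TopologicalSpace.induced (fun (x : X) => (fun f : X →L[ℝ] ℝ => f x)) inferInstance

/-- The slice of `C` determined by `f` and `α`. -/
def sliceOf {X : Type*} [NormedAddCommGroup X] [NormedSpace ℝ X]
    (C : Set X) (f : X →L[ℝ] ℝ) (α : ℝ) : Set X :=
  {x ∈ C | sSup ((fun y => f y) '' C) - α < f x}

/-- Almost preserved extreme points of `C`. -/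
def ape {X : Type*} [NormedAddCommGroup X] [NormedSpace ℝ X] (C : Set X) : Set X :=
  {x ∈ C | ∀ U : Set X, IsOpen[weakTop X] U → x ∈ U →
    ∃ (f : X →L[ℝ] ℝ) (α : ℝ), 0 < α ∧ (sliceOf C f α).Nonempty ∧ sliceOf C f α ⊆ U}

/-- Preimages of open sets under a single functional are weakly open. -/
lemma isOpen_weakTop_preimage {X : Type*} [NormedAddCommGroup X] [NormedSpace ℝ X]
    (f : X →L[ℝ] ℝ) {V : Set ℝ} (hV : IsOpen V) : IsOpen[weakTop X] (f ⁻¹' V) :=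
  isOpen_induced_iff.2 ⟨(fun g : (X →L[ℝ] ℝ) → ℝ => g f) ⁻¹' V,
    hV.preimage (continuous_apply f), rfl⟩

lemma isOpen_of_isOpen_weakTop {X : Type*} [NormedAddCommGroup X] [NormedSpace ℝ X]
    {U : Set X} (hU : IsOpen[weakTop X] U) : IsOpen U := by
  obtain ⟨V, hV, rfl⟩ := isOpen_induced_iff.1 hU
  exact hV.preimage (continuous_pi fun f => f.continuous)

lemma norm_sub_single_self {I : Type*} [DecidableEq I] (x : lp (fun _ : I => ℝ) 1) (i : I) :
    ‖x - lp.single 1 i (x i)‖ = ‖x‖ - |x i| := by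
  have h := lp.norm_sub_norm_compl_sub_single (p := 1) (by simp) x {i}
  simp at h
  linarith

lemma hasSum_abs {I : Type*} (x : lp (fun _ : I => ℝ) 1) :
    HasSum (fun j => |x j|) ‖x‖ := by
  simpa using lp.hasSum_norm (p := 1) (by simp) x

/-- A functional exceeding `c` somewhere on the unit ball exceeds `c` at some `±eⱼ`. -/
lemma exists_lt_abs_apply_single {I : Type*} [Nonempty I] [DecidableEq I]
    (f : lp (fun _ : I => ℝ) 1 →L[ℝ] ℝ) {x : lp (fun _ : I => ℝ) 1} (hx : ‖x‖ ≤ 1) {c : ℝ}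
    (hc : c < f x) : ∃ j, c < |f (lp.single 1 j (1 : ℝ))| := by
  by_contra! h
  have hc0 : 0 ≤ c := (abs_nonneg _).trans (h (Classical.arbitrary I))
  have h1 : HasSum (fun j => f (lp.single 1 j (x j))) (f x) :=
    (lp.hasSum_single (p := 1) (by simp) x).mapL f
  have h2 := (hasSum_abs x).mul_right c
  have h3 : f x ≤ ‖x‖ * c := by
    refine hasSum_le (fun j => ?_) h1 h2
    have : lp.single (E := fun _ : I => ℝ) 1 j (x j) = x j • lp.single 1 j (1 : ℝ) := by
      rw [← lp.single_smul]; simp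
    rw [this, map_smul, smul_eq_mul]
    refine (le_abs_self _).trans ?_
    rw [abs_mul]
    exact mul_le_mul_of_nonneg_left (h j) (abs_nonneg _)
  nlinarith

/-- The signed coordinate `s yᵢ` controls the distance from `y` to `s eᵢ` on the unit ball. -/
lemma norm_sub_single_le {I : Type*} [DecidableEq I] {y : lp (fun _ : I => ℝ) 1}
    (hy : ‖y‖ ≤ 1) (i : I) {s : ℝ} (hs : s = 1 ∨ s = -1) :
    ‖y - lp.single 1 i s‖ ≤ 2 * (1 - s * y i) := by
  have h1 : ‖y - lp.single 1 i s‖ ≤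
      ‖y - lp.single 1 i (y i)‖ + ‖lp.single (E := fun _ : I => ℝ) 1 i (y i - s)‖ := by
    refine le_trans (le_of_eq ?_) (norm_add_le _ _)
    rw [lp.single_sub]; congr 1; abel
  rw [norm_sub_single_self, lp.norm_single (by simp), Real.norm_eq_abs] at h1
  have h2 : |y i| ≤ 1 := (lp.norm_apply_le_norm (by simp) y i).trans hy
  have h3 := abs_le.1 h2
  rcases hs with rfl | rfl
  · have : |y i - 1| = 1 - y i := by rw [abs_sub_comm, abs_of_nonneg]; linarith
    linarith [le_abs_self (y i)]
  · have : |y i - -1| = 1 + y i := by rw [abs_of_nonneg] <;> linarith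
    linarith [neg_abs_le (y i)]

lemma norm_single_sign {I : Type*} [DecidableEq I] (i : I) {s : ℝ} (hs : s = 1 ∨ s = -1) :
    ‖lp.single (E := fun _ : I => ℝ) 1 i s‖ = 1 := by
  rw [lp.norm_single (by simp)]
  rcases hs with rfl | rfl <;> simp

/-- Every `±eᵢ` is an almost preserved extreme point. -/
lemma single_mem_ape {I : Type*} [DecidableEq I] (i : I) {s : ℝ} (hs : s = 1 ∨ s = -1) :
    lp.single 1 i s ∈ ape (Metric.closedBall (0 : lp (fun _ : I => ℝ) 1) 1) := by
  have hmem : lp.single 1 i s ∈ Metric.closedBall (0 : lp (fun _ : I => ℝ) 1) 1 := by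
    simp [norm_single_sign i hs]
  have hss : s * s = 1 := by rcases hs with rfl | rfl <;> norm_num
  refine ⟨hmem, fun U hU hxU => ?_⟩
  obtain ⟨ε, hε, hεU⟩ := Metric.isOpen_iff.1 (isOpen_of_isOpen_weakTop hU) _ hxU
  let f : lp (fun _ : I => ℝ) 1 →L[ℝ] ℝ := s • lp.evalCLM ℝ (fun _ : I => ℝ) 1 i
  have hf : ∀ y, f y = s * y i := fun y => rfl
  have hsup : sSup ((fun y => f y) '' Metric.closedBall (0 : lp (fun _ : I => ℝ) 1) 1) = 1 := by
    refine IsGreatest.csSup_eq ⟨⟨_, hmem, ?_⟩, ?_⟩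
    · simp [hf, hss]
    · rintro _ ⟨y, hy, rfl⟩
      have hy' : ‖y‖ ≤ 1 := by simpa using hy
      have h2 := norm_sub_single_le hy' i hs
      have := norm_nonneg (y - lp.single 1 i s)
      simp only [hf]
      linarith
  refine ⟨f, ε / 2, by positivity, ⟨_, hmem, ?_⟩, ?_⟩
  · rw [hsup, hf, lp.single_apply_self, hss]; linarith
  · rintro y ⟨hy, hy2⟩
    rw [hsup, hf] at hy2
    apply hεU
    have hy' : ‖y‖ ≤ 1 := by simpa using hy
    rw [Metric.mem_ball, dist_eq_norm]
    linarith [norm_sub_single_le hy' i hs]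

/-- An almost preserved extreme point of the ball is in the weak closure of `{±eⱼ}`, tested here
against the weakly open sets given by one functional. -/
lemma exists_single_mem_of_mem_ape {I : Type*} [Nonempty I] [DecidableEq I]
    {x : lp (fun _ : I => ℝ) 1}
    (hx : x ∈ ape (Metric.closedBall (0 : lp (fun _ : I => ℝ) 1) 1))
    (g : lp (fun _ : I => ℝ) 1 →L[ℝ] ℝ) {V : Set ℝ} (hV : IsOpen V) (hxV : g x ∈ V) :
    ∃ (j : I) (s : ℝ), (s = 1 ∨ s = -1) ∧ g (lp.single 1 j s) ∈ V := by
  obtain ⟨f, α, -, ⟨y, hyB, hy⟩, hsub⟩ := hx.2 _ (isOpen_weakTop_preimage g hV) hxV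
  obtain ⟨j, hj⟩ := exists_lt_abs_apply_single f (by simpa using hyB) hy
  obtain ⟨s, hs, hsj⟩ : ∃ s : ℝ, (s = 1 ∨ s = -1) ∧
      f (lp.single 1 j s) = |f (lp.single 1 j (1 : ℝ))| := by
    rcases abs_choice (f (lp.single 1 j (1 : ℝ))) with h | h
    · exact ⟨1, .inl rfl, h.symm⟩
    · exact ⟨-1, .inr rfl, by rw [lp.single_neg, map_neg, h]⟩
  refine ⟨j, s, hs, hsub ⟨?_, ?_⟩⟩
  · simp [norm_single_sign j hs]
  · rw [hsj]; exact hj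

/-- The almost preserved extreme points of the closed unit ball of `ℓ₁(I)`
are exactly the signed standard basis vectors `±eᵢ`, `i ∈ I`. -/
theorem ape_closedBall_lp_one_eq {I : Type*} [Nonempty I] [DecidableEq I] :
    ape (Metric.closedBall (0 : lp (fun _ : I => ℝ) 1) 1) =
      {x : lp (fun _ : I => ℝ) 1 | ∃ i : I,
        x = lp.single 1 i (1 : ℝ) ∨ x = -lp.single 1 i (1 : ℝ)} := by
  ext x
  constructor
  · intro hx
    have hxn : ‖x‖ ≤ 1 := by simpa using hx.1
    by_cases h0 : ∃ i, x i ≠ 0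
    · obtain ⟨i, hi⟩ := h0
      have hi1 : |x i| = 1 := by
        by_contra hne
        have hlt : |x i| < 1 :=
          lt_of_le_of_ne ((lp.norm_apply_le_norm (by simp) x i).trans hxn) hne
        obtain ⟨j, s, hs, hj⟩ := exists_single_mem_of_mem_ape hx
          (lp.evalCLM ℝ (fun _ : I => ℝ) 1 i)
          (V := {t | 0 < |t|} ∩ {t | |t| < 1})
          ((isOpen_lt continuous_const continuous_abs).inter
            (isOpen_lt continuous_abs continuous_const))
          ⟨abs_pos.2 hi, hlt⟩
        change 0 < |lp.single (E := fun _ : I => ℝ) 1 j s i| ∧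
          |lp.single (E := fun _ : I => ℝ) 1 j s i| < 1 at hj
        by_cases hij : i = j
        · subst hij
          rw [lp.single_apply_self] at hj
          rcases hs with rfl | rfl <;> norm_num at hj
        · rw [lp.single_apply_ne _ _ _ hij] at hj
          simp at hj
      have hxe : x = lp.single 1 i (x i) := by
        have h := norm_sub_single_self x i
        rw [hi1] at h
        exact sub_eq_zero.1 (norm_le_zero_iff.1 (by linarith))
      refine ⟨i, ?_⟩
      rcases eq_or_eq_neg_of_abs_eq hi1 with h | h <;> rw [h] at hxe
      · exact .inl hxe
      · exact .inr (by rw [hxe, lp.single_neg])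
    · push Not at h0
      exfalso
      have hx0 : x = 0 := lp.ext (funext h0)
      obtain ⟨j, s, hs, hj⟩ := exists_single_mem_of_mem_ape hx
        (lp.tsumCLM ℝ I ℝ) (V := {t | |t| < 1})
        (isOpen_lt continuous_abs continuous_const) (by simp [hx0])
      have hsum : lp.tsumCLM ℝ I ℝ (lp.single 1 j s) = s := by
        change ∑' k, lp.single (E := fun _ : I => ℝ) 1 j s k = s
        rw [tsum_eq_single j fun k hk => lp.single_apply_ne _ _ _ hk, lp.single_apply_self]
      rw [hsum] at hj
      rcases hs with rfl | rfl <;> norm_num at hj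
  · rintro ⟨i, rfl | rfl⟩
    · exact single_mem_ape i (.inl rfl)
    · rw [← lp.single_neg]
      exact single_mem_ape i (.inr rfl)
end
end

section
/- Let X and Y be real Banach spaces and let 1 < p < ∞. Let X ⊕_p Y denote the product X × Y with the norm ‖(x,y)‖ = (‖x‖^p + ‖y‖^p)^{1/p}. If (x₀,y₀) lies on the unit sphere S_{X⊕_pY} and is an almost preserved extreme point of B_{X⊕_pY}, then either x₀ = 0 or x₀/‖x₀‖ is an almost preserved extreme point of B_X. -/
/-!
Write `z = (x₀, y₀)`, `a = ‖x₀‖ > 0`, `b = ‖y₀‖`, and let `U` be a weak neighbourhood of `x₀ / a`.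

The key observation is that a slice of the unit ball of `X ⊕_p Y` restricts to a slice of the unit
ball of `X`: if `(x, y)` lies in the slice `{F > c}` and `s = ‖x‖ > 0`, then every `u ∈ B_X` with
`F (s u, 0) > c - F (0, y)` gives a point `(s u, y)` of the same slice, because
`‖(s u, y)‖ ≤ ‖(x, y)‖ ≤ 1`; the set of such `u` is a slice of `B_X`, and it contains `x / s`.

Weak neighbourhoods of `z` also control `s`. With functionals of norm at most one that norm `x₀` and
`y₀`, one can force `‖x‖` and `‖y‖` to be almost at least `a` and `b`, and then
`‖x‖ ^ p + ‖y‖ ^ p ≤ 1 = a ^ p + b ^ p` forces `‖x‖` to be close to `a`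
(`exists_lower_bound`). Joint continuity of `(s, w) ↦ s⁻¹ • w` at `(a, x₀)` then puts the whole
slice of `B_X` into `U`.
-/

open Set Metric Topology Bornology
open scoped ENNReal

noncomputable section

/-- If `t` is not much smaller than `b` and `s ^ q + t ^ q ≤ a ^ q + b ^ q`, then `s` is not much
larger than `a`. -/
lemma exists_lower_bound {q a b δ : ℝ} (hq : 0 < q) (ha : 0 ≤ a) (hb : 0 ≤ b) (hδ : 0 < δ) :
    ∃ c < b, ∀ s t : ℝ, 0 ≤ s → 0 ≤ t → c < t → s ^ q + t ^ q ≤ a ^ q + b ^ q → s < a + δ := by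
  have hlt : a ^ q < (a + δ) ^ q := Real.rpow_lt_rpow ha (by linarith) hq
  -- `max t 0` makes the function monotone on all of `ℝ`, so that `c` may be negative.
  have hcont : Continuous fun t : ℝ => (max t 0) ^ q :=
    (continuous_id.max continuous_const).rpow_const fun _ => Or.inr hq.le
  have hev : ∀ᶠ t in 𝓝 b, a ^ q + b ^ q - (a + δ) ^ q < (max t 0) ^ q := by
    refine hcont.continuousAt.eventually (lt_mem_nhds ?_)
    simp only [max_eq_left hb]
    linarith
  obtain ⟨η, hη, hball⟩ := Metric.eventually_nhds_iff.1 hev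
  refine ⟨b - η / 2, by linarith, fun s t hs ht hct hle => ?_⟩
  have h1 : a ^ q + b ^ q - (a + δ) ^ q < (max (b - η / 2) 0) ^ q := by
    apply hball
    rw [Real.dist_eq, show b - η / 2 - b = -(η / 2) by ring, abs_neg, abs_of_pos (by linarith)]
    linarith
  have h2 : (max (b - η / 2) 0) ^ q ≤ t ^ q :=
    Real.rpow_le_rpow (le_max_right _ _) (max_le hct.le ht) hq.le
  by_contra! hcon
  have h3 : (a + δ) ^ q ≤ s ^ q := Real.rpow_le_rpow (by linarith) hcon hq.le
  linarith

lemma continuous_weakTop {X : Type*} [NormedAddCommGroup X] [NormedSpace ℝ X] (f : X →L[ℝ] ℝ) :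
    Continuous[weakTop X, inferInstance] (fun x => f x) := by
  have h : Continuous fun g : (X →L[ℝ] ℝ) → ℝ => g f := continuous_apply f
  exact @Continuous.comp X ((X →L[ℝ] ℝ) → ℝ) ℝ (weakTop X) _ _ (fun x f => f x) (fun g => g f) h
    continuous_induced_dom

lemma prod_norm_le_one_iff {X Y : Type*} [NormedAddCommGroup X] [NormedAddCommGroup Y]
    (p : ℝ≥0∞) [Fact (1 ≤ p)] (hp : 0 < p.toReal) (w : WithLp p (X × Y)) :
    ‖w‖ ≤ 1 ↔ ‖w.fst‖ ^ p.toReal + ‖w.snd‖ ^ p.toReal ≤ 1 := by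
  rw [WithLp.prod_norm_eq_add hp]
  refine ⟨fun h => ?_, fun h => Real.rpow_le_one (by positivity) h (by positivity)⟩
  by_contra! hcon
  exact absurd h (not_le.2 (Real.one_lt_rpow hcon (by positivity)))

/-- If the open half space `{f > c}` meets the closed unit ball, their intersection contains a
nonempty slice of the ball. -/
lemma exists_slice_subset {X : Type*} [NormedAddCommGroup X] [NormedSpace ℝ X] (f : X →L[ℝ] ℝ)
    (c : ℝ) {v : X} (hv : ‖v‖ ≤ 1) (hc : c < f v) :
    ∃ α : ℝ, 0 < α ∧ (sliceOf (closedBall (0 : X) 1) f α).Nonempty ∧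
      ∀ u ∈ sliceOf (closedBall (0 : X) 1) f α, ‖u‖ ≤ 1 ∧ c < f u := by
  have hbdd : BddAbove ((fun y => f y) '' closedBall (0 : X) 1) := by
    refine ⟨‖f‖, ?_⟩
    rintro _ ⟨y, hy, rfl⟩
    have hy' : ‖y‖ ≤ 1 := by simpa using hy
    calc f y ≤ ‖f y‖ := Real.le_norm_self _
      _ ≤ ‖f‖ * ‖y‖ := f.le_opNorm y
      _ ≤ ‖f‖ := mul_le_of_le_one_right (norm_nonneg _) hy'
  have hvB : v ∈ closedBall (0 : X) 1 := by simpa using hv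
  have hle : f v ≤ sSup ((fun y => f y) '' closedBall (0 : X) 1) :=
    le_csSup hbdd ⟨v, hvB, rfl⟩
  refine ⟨sSup ((fun y => f y) '' closedBall (0 : X) 1) - c, by linarith, ⟨v, hvB, ?_⟩, ?_⟩
  · linarith
  · rintro u ⟨huB, hu⟩
    exact ⟨by simpa using huB, by linarith⟩

/-- Let `1 < p < ∞` and let `(x₀, y₀)` be a point of the unit sphere of
`X ⊕_p Y` which is an almost preserved extreme point of the closed unit ball. Then either
`x₀ = 0` or `x₀ / ‖x₀‖` is an almost preserved extreme point of the closed unit ball of `X`. -/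
theorem ape_sphere_lp_prod {X Y : Type*} [NormedAddCommGroup X] [NormedSpace ℝ X]
    [CompleteSpace X] [NormedAddCommGroup Y] [NormedSpace ℝ Y] [CompleteSpace Y]
    (p : ℝ≥0∞) [Fact (1 ≤ p)] (hp1 : 1 < p) (hp2 : p ≠ ⊤)
    (z : WithLp p (X × Y)) (hz : ‖z‖ = 1)
    (hape : z ∈ ape (Metric.closedBall (0 : WithLp p (X × Y)) 1)) :
    (WithLp.equiv p (X × Y) z).1 = 0 ∨
      ‖(WithLp.equiv p (X × Y) z).1‖⁻¹ • (WithLp.equiv p (X × Y) z).1 ∈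
        ape (Metric.closedBall (0 : X) 1) := by
  obtain ⟨-, hz2⟩ := hape
  change z.fst = 0 ∨ ‖z.fst‖⁻¹ • z.fst ∈ _
  have hq : 0 < p.toReal := ENNReal.toReal_pos (by positivity) hp2
  rcases eq_or_ne z.fst 0 with h0 | h0
  · exact Or.inl h0
  right
  have ha : 0 < ‖z.fst‖ := norm_pos_iff.2 h0
  have hsum : ‖z.fst‖ ^ p.toReal + ‖z.snd‖ ^ p.toReal = 1 := by
    have h := hz
    rw [WithLp.prod_norm_eq_add hq] at h
    exact (Real.rpow_left_inj (by positivity) zero_le_one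
      (by positivity : (1 / p.toReal) ≠ 0)).1 (by rw [h, Real.one_rpow])
  refine ⟨?_, fun U hU hxU => ?_⟩
  · rw [mem_closedBall_zero_iff, norm_smul, norm_inv, norm_norm, inv_mul_cancel₀ ha.ne']
  obtain ⟨O, hO, rfl⟩ := isOpen_induced_iff.1 hU
  -- Joint continuity of `(s, w) ↦ s⁻¹ • w` at `(‖x₀‖, x₀)` for the weak topology.
  have hcont : ContinuousAt
      (fun r : ℝ × ((X →L[ℝ] ℝ) → ℝ) => r.1⁻¹ • r.2) (‖z.fst‖, fun f => f z.fst) :=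
    (continuousAt_fst.inv₀ ha.ne').smul continuousAt_snd
  have hmem : ∀ᶠ r in 𝓝 ((‖z.fst‖, fun f => f z.fst) : ℝ × ((X →L[ℝ] ℝ) → ℝ)),
      r.1⁻¹ • r.2 ∈ O := by
    refine hcont.eventually (hO.mem_nhds ?_)
    have heq : ‖z.fst‖⁻¹ • (fun f : X →L[ℝ] ℝ => f z.fst) = fun f => f (‖z.fst‖⁻¹ • z.fst) := by
      ext f
      simp
    change ‖z.fst‖⁻¹ • (fun f : X →L[ℝ] ℝ => f z.fst) ∈ O
    rw [heq]
    exact hxU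
  rw [nhds_prod_eq] at hmem
  obtain ⟨A, hA, B, hB, hAB⟩ := Filter.eventually_prod_iff.1 hmem
  obtain ⟨δ, hδ, hball⟩ := Metric.eventually_nhds_iff.1 hA
  obtain ⟨O', hO'B, hO', hxO'⟩ := eventually_nhds_iff.1 hB
  obtain ⟨c, hc, hcs⟩ := exists_lower_bound hq ha.le (norm_nonneg z.snd) hδ
  obtain ⟨h, hh1, hhx⟩ := exists_dual_vector'' ℝ z.fst
  obtain ⟨k, hk1, hky⟩ := exists_dual_vector'' ℝ z.snd
  let P : WithLp p (X × Y) →L[ℝ] X := WithLp.fstL p ℝ X Y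
  let Q : WithLp p (X × Y) →L[ℝ] Y := WithLp.sndL p ℝ X Y
  let V : Set (WithLp p (X × Y)) :=
    {w | (fun f : X →L[ℝ] ℝ => (f.comp P) w) ∈ O'} ∩
      ({w | max (‖z.fst‖ - δ) 0 < (h.comp P) w} ∩ {w | c < (k.comp Q) w})
  have hV : IsOpen[weakTop (WithLp p (X × Y))] V := by
    have c1 := continuous_weakTop (h.comp P)
    have c2 := continuous_weakTop (k.comp Q)
    have c3 : Continuous[weakTop (WithLp p (X × Y)), inferInstance]
        (fun w => fun f : X →L[ℝ] ℝ => (f.comp P) w) :=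
      @continuous_pi _ _ _ (weakTop _) _ _ fun f => continuous_weakTop (f.comp P)
    exact (weakTop _).isOpen_inter _ _ (@IsOpen.preimage _ _ (weakTop _) _ _ c3 _ hO')
      ((weakTop _).isOpen_inter _ _ (@IsOpen.preimage _ _ (weakTop _) _ _ c1 _ isOpen_Ioi)
        (@IsOpen.preimage _ _ (weakTop _) _ _ c2 _ isOpen_Ioi))
  have hzV : z ∈ V := by
    refine ⟨hxO', ?_, ?_⟩
    · change max (‖z.fst‖ - δ) 0 < h z.fst
      rw [hhx]
      exact max_lt (by simpa using hδ) (by simpa using ha)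
    · change c < k z.snd
      rw [hky]
      simpa using hc
  obtain ⟨F, α, -, ⟨w, hwB, hwα⟩, hS⟩ := hz2 V hV hzV
  have hwV : w ∈ V := hS ⟨hwB, hwα⟩
  obtain ⟨-, hwh, hwk⟩ := hwV
  have hwh' : max (‖z.fst‖ - δ) 0 < ‖w.fst‖ :=
    lt_of_lt_of_le hwh ((Real.le_norm_self _).trans (h.le_of_opNorm_le_of_le hh1 le_rfl |>.trans
      (one_mul _).le))
  have hwk' : c < ‖w.snd‖ :=
    lt_of_lt_of_le hwk ((Real.le_norm_self _).trans (k.le_of_opNorm_le_of_le hk1 le_rfl |>.trans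
      (one_mul _).le))
  have hs : 0 < ‖w.fst‖ := (le_max_right _ _).trans_lt hwh'
  have hw1 : ‖w.fst‖ ^ p.toReal + ‖w.snd‖ ^ p.toReal ≤ 1 :=
    (prod_norm_le_one_iff p hq w).1 (by simpa using hwB)
  have hslt := hcs _ _ hs.le (norm_nonneg w.snd) hwk' (hw1.trans hsum.ge)
  have hAs : A ‖w.fst‖ := by
    apply hball
    rw [Real.dist_eq, abs_lt]
    have := (le_max_left _ _).trans_lt hwh'
    constructor <;> linarith
  let J : X →L[ℝ] WithLp p (X × Y) :=
    (WithLp.prodContinuousLinearEquiv p ℝ X Y).symm.toContinuousLinearMap.comp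
      (ContinuousLinearMap.inl ℝ X Y)
  let yw : WithLp p (X × Y) := WithLp.toLp p ((0 : X), w.snd)
  have hJ : ∀ x : X, J x + yw = WithLp.toLp p (x, w.snd) := by
    intro x
    change WithLp.toLp p ((x, 0) : X × Y) + WithLp.toLp p ((0 : X), w.snd) = _
    rw [← WithLp.toLp_add]
    simp
  set σ := sSup ((fun y => F y) '' closedBall (0 : WithLp p (X × Y)) 1) with hσ
  have hFJ : ∀ u : X, F (WithLp.toLp p (‖w.fst‖ • u, w.snd)) =
      ‖w.fst‖ * (F.comp J) u + F yw := by
    intro u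
    rw [← hJ, map_add, map_smul, map_smul, smul_eq_mul]
    rfl
  have hwu : WithLp.toLp p (‖w.fst‖ • (‖w.fst‖⁻¹ • w.fst), w.snd) = w := by
    rw [smul_inv_smul₀ hs.ne']
    rfl
  obtain ⟨β, hβ, hne, hsub⟩ := exists_slice_subset (F.comp J) ((σ - α - F yw) / ‖w.fst‖)
    (v := ‖w.fst‖⁻¹ • w.fst)
    (by rw [norm_smul, norm_inv, norm_norm, inv_mul_cancel₀ hs.ne'])
    (by
      rw [div_lt_iff₀' hs]
      have h1 := hFJ (‖w.fst‖⁻¹ • w.fst)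
      rw [hwu] at h1
      linarith)
  refine ⟨F.comp J, β, hβ, hne, fun u hu => ?_⟩
  obtain ⟨hu1, hu2⟩ := hsub u hu
  rw [div_lt_iff₀' hs] at hu2
  -- The point `(s u, y)` lies in the given slice of the unit ball of `X ⊕_p Y`.
  have huS : WithLp.toLp p (‖w.fst‖ • u, w.snd) ∈ V := by
    apply hS
    refine ⟨?_, ?_⟩
    · rw [mem_closedBall_zero_iff, prod_norm_le_one_iff p hq]
      refine le_trans (add_le_add_left (Real.rpow_le_rpow (norm_nonneg _) ?_ hq.le) _) hw1
      change ‖‖w.fst‖ • u‖ ≤ ‖w.fst‖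
      rw [norm_smul, norm_norm]
      exact mul_le_of_le_one_right hs.le hu1
    · rw [hFJ]
      linarith
  have hfin := hAB hAs (hO'B _ huS.1)
  change (fun f : X →L[ℝ] ℝ => f u) ∈ O
  convert hfin using 1
  ext f
  change f u = ‖w.fst‖⁻¹ * f (‖w.fst‖ • u)
  rw [map_smul, smul_eq_mul, inv_mul_cancel_left₀ hs.ne']
end
end
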